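/- Let n ≥ 2 and let V ⊆ F_2^{2n} be a self-dual code of length 2n. Then there exist a permutation σ of the 2n coordinates and an n × 2n matrix M over F_2 whose associated block matrix is boxed, such that the image of V under the coordinate permutation induced by σ equals the row space of M. In other words, every self-dual code of length at least 4 is equivalent to a code generated by a boxed matrix. -/

import Mathlib

/-- The `(i,j)` block (a pair in `F_2²`) of an `n × 2n` matrix over `F_2`:
`b i j = (M i (2j), M i (2j+1))` (0-indexed), corresponding to
`(M_{i,2j−1}, M_{i,2j})` in 1-indexed notation. -/
def blockOf {n : ℕ} (M : Matrix (Fin n) (Fin (2 * n)) (ZMod 2)) (i j : Fin n) :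
    ZMod 2 × ZMod 2 :=
  (M i ⟨2 * j.val, by have := j.isLt; omega⟩,
   M i ⟨2 * j.val + 1, by have := j.isLt; omega⟩)

/-- The block matrix of `M` is half-boxed: (1) the bottom row consists of `(1,1)` pairs;
(2) the last column consists of `(1,0)` pairs except in the bottom row;
(3) the diagonal entries are `(0,1)` except in the bottom row;
(4) all other blocks are identical pairs `(0,0)` or `(1,1)`. -/
def IsHalfBoxed {n : ℕ} (M : Matrix (Fin n) (Fin (2 * n)) (ZMod 2)) : Prop :=
  (∀ i j : Fin n, i.val = n - 1 → blockOf M i j = (1, 1)) ∧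
  (∀ i j : Fin n, i.val < n - 1 → j.val = n - 1 → blockOf M i j = (1, 0)) ∧
  (∀ i : Fin n, i.val < n - 1 → blockOf M i i = (0, 1)) ∧
  (∀ i j : Fin n, i.val < n - 1 → j.val < n - 1 → i ≠ j →
    blockOf M i j = (0, 0) ∨ blockOf M i j = (1, 1))

/-- The block matrix of `M` is boxed: it is half-boxed and moreover
(5) `b i j + b j i = (1,1)` for all `j < i` below the bottom row. -/
def IsBoxed {n : ℕ} (M : Matrix (Fin n) (Fin (2 * n)) (ZMod 2)) : Prop :=
  IsHalfBoxed M ∧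
  ∀ i j : Fin n, j.val < i.val → i.val < n - 1 →
    blockOf M i j + blockOf M j i = (1, 1)

/-!
Group the coordinates into pairs. In characteristic 2, two words that are constant on all pairs are
orthogonal, and a self-dual code contains the all-ones word. Choose a pairing for which the code
contains as few pairwise constant words as possible. If one of them, `w`, took distinct values on
two pairs `{a₀, a₁}` and `{b₀, b₁}`, then exchanging `a₁` with `b₀` would lose `w` and, by
orthogonality to `w`, gain nothing. So only the constant words are pairwise constant, and by duality
every vector with coordinate sum zero is the vector of pair sums of some codeword. Codewords with
pair sums `δ i + δ l`, normalized by adding the all-ones word and by flipping pairs, are the rows of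
the boxed matrix; orthogonality of rows `i` and `j` makes the blocks at `(i, j)` and `(j, i)`
complementary.
-/

open scoped Matrix

section Pairing

variable {R ι κ : Type*} [CommSemiring R]

/-- A code which equals its own orthogonal complement for the dot product. -/
def IsSelfDualCode [Fintype κ] (C : Submodule R (κ → R)) : Prop :=
  ∀ y, y ∈ C ↔ ∀ x ∈ C, x ⬝ᵥ y = 0

/-- The sums of a word over the pairs `{e (j, 0), e (j, 1)}` of a pairing `e` of its coordinates.
In characteristic 2 they vanish exactly when the word is constant on each pair. -/
def pairSum (e : ι × Fin 2 ≃ κ) : (κ → R) →ₗ[R] (ι → R) where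
  toFun v j := v (e (j, 0)) + v (e (j, 1))
  map_add' v w := by ext j; simp only [Pi.add_apply]; ring
  map_smul' c v := by ext j; simp only [Pi.smul_apply, smul_eq_mul, RingHom.id_apply]; ring

theorem pairSum_apply (e : ι × Fin 2 ≃ κ) (v : κ → R) (j : ι) :
    pairSum e v j = v (e (j, 0)) + v (e (j, 1)) := rfl

/-- A pairing is tight for a code if all codewords with vanishing pair sums are constant. -/
def IsTightPairing (e : ι × Fin 2 ≃ κ) (C : Submodule R (κ → R)) : Prop :=
  ∀ v ∈ C, pairSum e v = 0 → ∀ k k', v k = v k'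

/-- The rows `r i` of a boxed matrix whose last row and column have index `l`, with the columns
paired by `e`. The blocks off the diagonal and the last column have equal entries because their
sums, given by `pairSum_eq`, are zero. -/
structure IsBoxedFamily [DecidableEq ι] (e : ι × Fin 2 ≃ κ) (l : ι) (r : ι → κ → R) : Prop where
  pairSum_eq : ∀ i, pairSum e (r i) = Pi.single i 1 + Pi.single l 1
  last_row : r l = 1
  last_col : ∀ i, r i (e (l, 0)) = 1
  diag : ∀ i ≠ l, r i (e (i, 0)) = 0

/-- The pairing of `2j` with `2j + 1`. -/
def consecutivePairing (n : ℕ) : Fin n × Fin 2 ≃ Fin (2 * n) :=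
  finProdFinEquiv.trans (finCongr (mul_comm n 2))

theorem pairSum_prodShear (e : ι × Fin 2 ≃ κ) (τ : ι → Equiv.Perm (Fin 2)) :
    pairSum (R := R) (((Equiv.refl ι).prodShear τ).trans e) = pairSum e := by
  ext v j
  simpa [pairSum_apply, Fin.sum_univ_two] using Equiv.sum_comp (τ j) fun b ↦ v (e (j, b))

theorem sum_pairSum [Fintype ι] [Fintype κ] (e : ι × Fin 2 ≃ κ) (v : κ → R) :
    ∑ j, pairSum e v j = ∑ k, v k := by
  simp only [pairSum_apply, ← Equiv.sum_comp e v, Fintype.sum_prod_type, Fin.sum_univ_two]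

theorem IsSelfDualCode.dotProduct_eq_zero [Fintype κ] {C : Submodule R (κ → R)}
    (hC : IsSelfDualCode C) {x y : κ → R} (hx : x ∈ C) (hy : y ∈ C) : x ⬝ᵥ y = 0 :=
  (hC y).1 hy x hx

end Pairing

section CharTwo

variable {R ι κ : Type*} [CommRing R] [CharP R 2]

theorem pairSum_apply_eq_zero_iff {e : ι × Fin 2 ≃ κ} {v : κ → R} {j : ι} :
    pairSum e v j = 0 ↔ v (e (j, 0)) = v (e (j, 1)) :=
  CharTwo.add_eq_zero

theorem pairSum_one (e : ι × Fin 2 ≃ κ) : pairSum e (1 : κ → R) = 0 := by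
  ext j
  simp [pairSum_apply, CharTwo.add_self_eq_zero]

theorem pairSum_swap_trans [DecidableEq ι] (e : ι × Fin 2 ≃ κ) {a b : ι} (hab : a ≠ b)
    (v : κ → R) :
    pairSum ((Equiv.swap (a, 1) (b, 0)).trans e) v =
      pairSum e v + (v (e (a, 1)) + v (e (b, 0))) • (Pi.single a 1 + Pi.single b 1) := by
  have ha : Equiv.swap (a, (1 : Fin 2)) (b, 0) (a, 0) = (a, 0) :=
    Equiv.swap_apply_of_ne_of_ne (by simp) (by simp [hab])
  have hb : Equiv.swap (a, (1 : Fin 2)) (b, 0) (b, 1) = (b, 1) :=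
    Equiv.swap_apply_of_ne_of_ne (by simp [hab.symm]) (by simp)
  ext j
  simp only [pairSum_apply, Equiv.trans_apply, Pi.add_apply, Pi.smul_apply, smul_eq_mul]
  obtain rfl | hja := eq_or_ne a j
  · rw [ha, Equiv.swap_apply_left, Pi.single_eq_same, Pi.single_eq_of_ne hab]
    linear_combination -v (e (a, 1)) * CharTwo.two_eq_zero (R := R)
  obtain rfl | hjb := eq_or_ne b j
  · rw [hb, Equiv.swap_apply_right, Pi.single_eq_same, Pi.single_eq_of_ne hab.symm]
    linear_combination -v (e (b, 0)) * CharTwo.two_eq_zero (R := R)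
  · simp [Equiv.swap_apply_def, hja.symm, hjb.symm]

-- On each pair, `x₁ = x₀ + s` and `y₁ = y₀ + t` give `x₀ y₀ + x₁ y₁ = x₀ t + s y₀ + s t`.
theorem dotProduct_eq_pairSum [Fintype ι] [Fintype κ] (e : ι × Fin 2 ≃ κ) (x y : κ → R) :
    x ⬝ᵥ y = (fun j ↦ x (e (j, 0))) ⬝ᵥ pairSum e y + pairSum e x ⬝ᵥ (fun j ↦ y (e (j, 0))) +
      pairSum e x ⬝ᵥ pairSum e y := by
  simp only [dotProduct, ← Equiv.sum_comp e fun k ↦ x k * y k, Fintype.sum_prod_type,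
    Fin.sum_univ_two, ← Finset.sum_add_distrib, pairSum_apply]
  refine Finset.sum_congr rfl fun j _ ↦ ?_
  linear_combination -(x (e (j, 0)) * (y (e (j, 0)) + y (e (j, 1))) + x (e (j, 1)) * y (e (j, 0))) *
    CharTwo.two_eq_zero (R := R)

namespace IsSelfDualCode

variable [Fintype κ] {C : Submodule R (κ → R)}

-- `x ⬝ᵥ x = (x ⬝ᵥ 1) ^ 2` in characteristic 2.
theorem one_mem [IsReduced R] (hC : IsSelfDualCode C) : 1 ∈ C := by
  refine (hC 1).2 fun x hx ↦ pow_eq_zero_iff two_ne_zero |>.1 ?_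
  rw [dotProduct_one, CharTwo.sum_sq, ← hC.dotProduct_eq_zero hx hx]
  simp only [dotProduct, sq]

theorem sum_pairSum_eq_zero [IsReduced R] [Fintype ι] (hC : IsSelfDualCode C)
    (e : ι × Fin 2 ≃ κ) {v : κ → R} (hv : v ∈ C) : ∑ j, pairSum e v j = 0 := by
  rw [sum_pairSum, ← dotProduct_one, hC.dotProduct_eq_zero hv hC.one_mem]

theorem inf_ker_pairSum_swap_lt [IsDomain R] [Finite ι] [DecidableEq ι] (hC : IsSelfDualCode C)
    (e : ι × Fin 2 ≃ κ) {w : κ → R} (hw : w ∈ C) (hw0 : pairSum e w = 0) {a b : ι}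
    (hab : w (e (a, 0)) ≠ w (e (b, 0))) :
    C ⊓ (pairSum ((Equiv.swap (a, 1) (b, 0)).trans e)).ker < C ⊓ (pairSum e).ker := by
  cases nonempty_fintype ι
  have hne : a ≠ b := fun h ↦ hab (h ▸ rfl)
  have hwab : w (e (a, 0)) + w (e (b, 0)) ≠ 0 := by rwa [Ne, CharTwo.add_eq_zero]
  refine lt_of_le_not_ge (fun v hv ↦ ?_) fun hle ↦ ?_
  · obtain ⟨hvC, hv0⟩ := Submodule.mem_inf.1 hv
    set d := v (e (a, 1)) + v (e (b, 0))
    have hvd : pairSum e v = d • (Pi.single a 1 + Pi.single b 1) := by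
      rwa [LinearMap.mem_ker, pairSum_swap_trans e hne, add_eq_zero_iff_eq_neg, ← neg_smul,
        CharTwo.neg_eq] at hv0
    have horth : d * (w (e (a, 0)) + w (e (b, 0))) = 0 := by
      rw [← hC.dotProduct_eq_zero hvC hw, dotProduct_eq_pairSum e, hw0, hvd]
      simp [add_dotProduct, mul_add]
    have hd : d = 0 := (mul_eq_zero.1 horth).resolve_right hwab
    exact ⟨hvC, by rw [SetLike.mem_coe, LinearMap.mem_ker, hvd, hd, zero_smul]⟩
  · have hwa : w (e (a, 0)) = w (e (a, 1)) := pairSum_apply_eq_zero_iff.1 (congrFun hw0 a)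
    have h := congrFun (hle ⟨hw, hw0⟩).2 a
    rw [pairSum_swap_trans e hne, hw0, ← hwa] at h
    exact hwab (by simpa [hne] using h)

theorem exists_isTightPairing [IsDomain R] [Finite ι] (hC : IsSelfDualCode C)
    (e₀ : ι × Fin 2 ≃ κ) : ∃ e : ι × Fin 2 ≃ κ, IsTightPairing e C := by
  classical
  have : Nonempty (ι × Fin 2 ≃ κ) := ⟨e₀⟩
  obtain ⟨-, ⟨⟨e, rfl⟩, hmin⟩⟩ :=
    (Set.finite_range fun e : ι × Fin 2 ≃ κ ↦ C ⊓ (pairSum e).ker).exists_minimal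
      (Set.range_nonempty _)
  refine ⟨e, fun v hv hv0 ↦ ?_⟩
  have hpair (j : ι) (c : Fin 2) : v (e (j, c)) = v (e (j, 0)) := by
    have h : v (e (j, 0)) = v (e (j, 1)) := pairSum_apply_eq_zero_iff.1 (congrFun hv0 j)
    fin_cases c
    exacts [rfl, h.symm]
  refine e.forall_congr_right.1 fun ⟨a, c⟩ ↦ e.forall_congr_right.1 fun ⟨b, d⟩ ↦ ?_
  rw [hpair a c, hpair b d]
  by_contra hab
  have hlt := hC.inf_ker_pairSum_swap_lt e hv hv0 hab
  exact hlt.not_ge (hmin ⟨_, rfl⟩ hlt.le)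

theorem le_span_range [IsReduced R] [Finite ι] [DecidableEq ι] (hC : IsSelfDualCode C)
    {e : ι × Fin 2 ≃ κ} (he : IsTightPairing e C) {l : ι} {r : ι → κ → R}
    (hsum : ∀ i, pairSum e (r i) = Pi.single i 1 + Pi.single l 1) (hl : r l = 1)
    (hrC : ∀ i, r i ∈ C) :
    C ≤ Submodule.span R (Set.range r) := by
  cases nonempty_fintype ι
  intro v hv
  have hmem (i : ι) : r i ∈ Submodule.span R (Set.range r) := Submodule.subset_span ⟨i, rfl⟩
  set u := ∑ i, pairSum e v i • r i with hu
  have huS : u ∈ Submodule.span R (Set.range r) :=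
    Submodule.sum_mem _ fun i _ ↦ Submodule.smul_mem _ _ (hmem i)
  have huC : u ∈ C := Submodule.sum_mem _ fun i _ ↦ Submodule.smul_mem _ _ (hrC i)
  have hpair : pairSum e u = pairSum e v := by
    simp only [hu, map_sum, map_smul, hsum, smul_add, Finset.sum_add_distrib,
      ← Finset.sum_smul, hC.sum_pairSum_eq_zero e hv, zero_smul, add_zero]
    exact (pi_eq_sum_univ' _).symm
  have hconst := he (v - u) (C.sub_mem hv huC) (by rw [map_sub, hpair, sub_self])
  have hvu : v - u = (v - u) (e (l, 0)) • r l := by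
    ext k
    simpa [hl] using hconst k (e (l, 0))
  have hvuS : v - u ∈ Submodule.span R (Set.range r) := hvu ▸ Submodule.smul_mem _ _ (hmem l)
  simpa using Submodule.add_mem _ hvuS huS

end IsSelfDualCode

namespace IsBoxedFamily

variable [DecidableEq ι] {e : ι × Fin 2 ≃ κ} {l : ι} {r : ι → κ → R} {i j : ι}

theorem apply_zero_eq_apply_one (hr : IsBoxedFamily e l r) (hji : j ≠ i) (hjl : j ≠ l) :
    r i (e (j, 0)) = r i (e (j, 1)) := by
  rw [← pairSum_apply_eq_zero_iff, hr.pairSum_eq]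
  simp [hji, hjl]

theorem add_eq_one_of_dotProduct_eq_zero [Finite ι] [Fintype κ] (hr : IsBoxedFamily e l r)
    (hij : i ≠ j) (hi : i ≠ l) (hj : j ≠ l) (horth : r i ⬝ᵥ r j = 0) :
    r i (e (j, 0)) + r j (e (i, 0)) = 1 := by
  cases nonempty_fintype ι
  simp only [dotProduct_eq_pairSum e, hr.pairSum_eq, dotProduct_add, add_dotProduct,
    dotProduct_single_one, single_one_dotProduct, hr.last_col, Pi.add_apply, Pi.single_eq_same,
    Pi.single_eq_of_ne hij.symm, Pi.single_eq_of_ne hi.symm, Pi.single_eq_of_ne hj] at horth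
  linear_combination horth - 2 * CharTwo.two_eq_zero (R := R)

end IsBoxedFamily

end CharTwo

section Field

variable {F ι κ : Type*} [Field F] [CharP F 2] [Fintype κ]
  {C : Submodule F (κ → F)} {e : ι × Fin 2 ≃ κ}

-- A functional vanishing on the pair sums of all codewords is a pairwise constant dual word.
theorem IsSelfDualCode.exists_pairSum_eq [Fintype ι] (hC : IsSelfDualCode C)
    (he : IsTightPairing e C) {d : ι → F} (hd : ∑ i, d i = 0) : ∃ v ∈ C, pairSum e v = d := by
  classical
  by_contra hcon
  obtain ⟨f, hfd, hf⟩ :=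
    Submodule.exists_dual_map_eq_bot_of_notMem (p := C.map (pairSum e)) hcon inferInstance
  obtain ⟨g, rfl⟩ := (dotProductEquiv F ι).surjective f
  let y : κ → F := fun k ↦ g (e.symm k).1
  have hy0 : pairSum e y = 0 := by
    ext j
    simp [y, pairSum_apply, CharTwo.add_self_eq_zero]
  have hyC : y ∈ C := by
    refine (hC y).2 fun x hx ↦ ?_
    have hgx : g ⬝ᵥ pairSum e x = 0 :=
      LinearMap.le_ker_iff_map.2 hf (Submodule.mem_map_of_mem hx)
    simpa [dotProduct_eq_pairSum e, hy0, y, dotProduct_comm] using hgx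
  have hg (i j : ι) : g i = g j := by
    simpa [y] using he y hyC hy0 (e (i, 0)) (e (j, 0))
  refine hfd ?_
  obtain _ | ⟨⟨i⟩⟩ := isEmpty_or_nonempty ι
  · simp
  · simp [dotProduct, hg _ i, ← Finset.mul_sum, hd]

theorem IsSelfDualCode.exists_pairSum_eq_single_add_single [Finite ι] [DecidableEq ι]
    (hC : IsSelfDualCode C) (he : IsTightPairing e C) (i l : ι) :
    ∃ v ∈ C, pairSum e v = Pi.single i 1 + Pi.single l 1 ∧ v (e (l, 0)) = 1 := by
  cases nonempty_fintype ι
  obtain ⟨v, hv, hvs⟩ := hC.exists_pairSum_eq he (d := Pi.single i 1 + Pi.single l 1)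
    (by simp [Finset.sum_add_distrib, CharTwo.add_self_eq_zero])
  refine ⟨v + (1 - v (e (l, 0))) • 1, C.add_mem hv (C.smul_mem _ hC.one_mem), ?_, by simp⟩
  rw [map_add, map_smul, pairSum_one, smul_zero, add_zero, hvs]

end Field

section Binary

theorem exists_perm_apply_zero_eq_zero {x : Fin 2 → ZMod 2} (hx : x 0 + x 1 = 1) :
    ∃ τ : Equiv.Perm (Fin 2), x (τ 0) = 0 := by
  obtain ⟨b, hb⟩ : ∃ b, x b = 0 := by
    revert x
    decide
  exact ⟨Equiv.swap 0 b, by rwa [Equiv.swap_apply_left]⟩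

theorem IsSelfDualCode.exists_isBoxedFamily {ι κ : Type*} [Finite ι] [DecidableEq ι] [Fintype κ]
    {C : Submodule (ZMod 2) (κ → ZMod 2)} (hC : IsSelfDualCode C) (e₀ : ι × Fin 2 ≃ κ) (l : ι) :
    ∃ (e : ι × Fin 2 ≃ κ) (r : ι → κ → ZMod 2),
      IsBoxedFamily e l r ∧ C = Submodule.span (ZMod 2) (Set.range r) := by
  obtain ⟨e, he⟩ := hC.exists_isTightPairing e₀
  choose r hrC hsum hcol using fun i ↦ hC.exists_pairSum_eq_single_add_single he i l
  have hflip (i : ι) : ∃ τ : Equiv.Perm (Fin 2),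
      (i = l → τ = 1) ∧ (i ≠ l → r i (e (i, τ 0)) = 0) := by
    rcases eq_or_ne i l with hi | hi
    · exact ⟨1, fun _ ↦ rfl, fun h ↦ absurd hi h⟩
    · have hdiag : r i (e (i, 0)) + r i (e (i, 1)) = 1 := by
        simpa [pairSum_apply, hi] using congrFun (hsum i) i
      obtain ⟨τ, hτ⟩ := exists_perm_apply_zero_eq_zero (x := fun b ↦ r i (e (i, b))) hdiag
      exact ⟨τ, fun h ↦ absurd h hi, fun _ ↦ hτ⟩
  choose τ hτl hτ using hflip
  have hsuml : pairSum e (r l) = 0 := by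
    rw [hsum, ← Pi.single_add, CharTwo.add_self_eq_zero, Pi.single_zero]
  have hboxed : IsBoxedFamily (((Equiv.refl ι).prodShear τ).trans e) l r := by
    refine ⟨fun i ↦ by rw [pairSum_prodShear, hsum], ?_, fun i ↦ ?_, hτ⟩
    · ext k
      rw [he (r l) (hrC l) hsuml k (e (l, 0)), hcol, Pi.one_apply]
    · simpa [hτl l rfl] using hcol i
  refine ⟨_, r, hboxed, (hC.le_span_range he hsum hboxed.last_row hrC).antisymm ?_⟩
  exact Submodule.span_le.2 (Set.range_subset_iff.2 hrC)

theorem blockOf_comp_consecutivePairing_symm {n : ℕ} (f : Fin n → Fin n × Fin 2 → ZMod 2)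
    (i j : Fin n) :
    blockOf (fun i k ↦ f i ((consecutivePairing n).symm k)) i j = (f i (j, 0), f i (j, 1)) := by
  have h (b : Fin 2) (hb : 2 * j.val + b < 2 * n) :
      (consecutivePairing n).symm ⟨2 * j.val + b, hb⟩ = (j, b) := by
    rw [Equiv.symm_apply_eq, Fin.ext_iff]
    simp [consecutivePairing, add_comm]
  exact Prod.ext (congrArg (f i) (h 0 _)) (congrArg (f i) (h 1 _))

variable {n : ℕ} {κ : Type*} {e : Fin n × Fin 2 ≃ κ} {l : Fin n} {r : Fin n → κ → ZMod 2}

theorem IsBoxedFamily.isHalfBoxed (hl : l.val = n - 1) (hr : IsBoxedFamily e l r) :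
    IsHalfBoxed fun i k ↦ r i (e ((consecutivePairing n).symm k)) := by
  have hlt {i : Fin n} (hi : i.val < n - 1) : i ≠ l := by rintro rfl; omega
  have hsum (i j : Fin n) := congrFun (hr.pairSum_eq i) j
  simp only [pairSum_apply, Pi.add_apply] at hsum
  simp only [IsHalfBoxed, blockOf_comp_consecutivePairing_symm fun i p ↦ r i (e p)]
  refine ⟨fun i j hi ↦ ?_, fun i j hi hj ↦ ?_, fun i hi ↦ ?_, fun i j _ hj hij ↦ ?_⟩
  · obtain rfl : i = l := Fin.ext (hi.trans hl.symm)
    simp [hr.last_row]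
  · obtain rfl : j = l := Fin.ext (hj.trans hl.symm)
    simpa [hr.last_col i, hlt hi] using hsum i j
  · simpa [hr.diag i (hlt hi), hlt hi] using hsum i i
  · simp only [hr.apply_zero_eq_apply_one hij.symm (hlt hj), Prod.mk.injEq, and_self]
    exact (by decide : ∀ c : ZMod 2, c = 0 ∨ c = 1) _

theorem IsBoxedFamily.isBoxed [Fintype κ] (hl : l.val = n - 1) (hr : IsBoxedFamily e l r)
    (horth : ∀ i j, r i ⬝ᵥ r j = 0) :
    IsBoxed fun i k ↦ r i (e ((consecutivePairing n).symm k)) := by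
  refine ⟨hr.isHalfBoxed hl, fun i j hji hi ↦ ?_⟩
  have hij : i ≠ j := by rintro rfl; omega
  have hil : i ≠ l := by rintro rfl; omega
  have hjl : j ≠ l := by rintro rfl; omega
  have hadd : r i (e (j, 0)) + r j (e (i, 0)) = 1 :=
    hr.add_eq_one_of_dotProduct_eq_zero hij hil hjl (horth i j)
  simp only [blockOf_comp_consecutivePairing_symm fun i p ↦ r i (e p), Prod.mk_add_mk,
    ← hr.apply_zero_eq_apply_one hij.symm hjl, ← hr.apply_zero_eq_apply_one hij hil, hadd]

end Binary

/-- Every self-dual code of length `2n ≥ 4` is, after a permutation of coordinates,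
generated by the rows of a matrix whose block matrix is boxed. -/
theorem stmt_11 (n : ℕ) (hn : 2 ≤ n)
    (V : Submodule (ZMod 2) (Fin (2 * n) → ZMod 2))
    (hV : ∀ y : Fin (2 * n) → ZMod 2, y ∈ V ↔ ∀ x ∈ V, ∑ i, x i * y i = 0) :
    ∃ (σ : Equiv.Perm (Fin (2 * n))) (M : Matrix (Fin n) (Fin (2 * n)) (ZMod 2)),
      IsBoxed M ∧
      Submodule.map (LinearMap.funLeft (ZMod 2) (ZMod 2) σ) V =
        Submodule.span (ZMod 2) (Set.range fun i : Fin n => M i) := by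
  have hC : IsSelfDualCode V := hV
  obtain ⟨e, r, hr, hspan⟩ :=
    hC.exists_isBoxedFamily (consecutivePairing n) ⟨n - 1, by omega⟩
  have hrV (i : Fin n) : r i ∈ V := hspan ▸ Submodule.subset_span ⟨i, rfl⟩
  refine ⟨(consecutivePairing n).symm.trans e, _,
    hr.isBoxed rfl fun i j ↦ hC.dotProduct_eq_zero (hrV i) (hrV j), ?_⟩
  rw [hspan, Submodule.map_span, ← Set.range_comp]
  rfl
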